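/- arXiv:0709.4586 — 2 statements merged into one kernel-verified Lean document; each statement's English description precedes it below -/
import Mathlib

section
/- Let V be a finite-dimensional real inner product space, let τ : V × V × V → ℝ be an alternating trilinear form, and let T : V × V → V be the bilinear map determined by ⟨T(X,Y), Z⟩ = τ(X,Y,Z) for all X, Y, Z ∈ V. Then the quadrilinear form σ(X,Y,Z,W) := ⟨T(X,Y), T(Z,W)⟩ + ⟨T(Y,Z), T(X,W)⟩ + ⟨T(Z,X), T(Y,W)⟩ is fully alternating, i.e. it changes sign under the transposition of any two of its four arguments. -/
open scoped RealInnerProductSpace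

theorem statement7 (V : Type*) [NormedAddCommGroup V] [InnerProductSpace ℝ V]
    [FiniteDimensional ℝ V]
    (τ : V →ₗ[ℝ] V →ₗ[ℝ] V →ₗ[ℝ] ℝ)
    (hτ12 : ∀ X Y Z : V, τ X Y Z = -τ Y X Z)
    (hτ23 : ∀ X Y Z : V, τ X Y Z = -τ X Z Y)
    (hτ13 : ∀ X Y Z : V, τ X Y Z = -τ Z Y X)
    (T : V →ₗ[ℝ] V →ₗ[ℝ] V)
    (hT : ∀ X Y Z : V, ⟪T X Y, Z⟫ = τ X Y Z)
    (σ : V → V → V → V → ℝ)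
    (hσ : ∀ X Y Z W : V,
      σ X Y Z W = ⟪T X Y, T Z W⟫ + ⟪T Y Z, T X W⟫ + ⟪T Z X, T Y W⟫) :
    ∀ X Y Z W : V,
      σ X Y Z W = -σ Y X Z W ∧
      σ X Y Z W = -σ Z Y X W ∧
      σ X Y Z W = -σ W Y Z X ∧
      σ X Y Z W = -σ X Z Y W ∧
      σ X Y Z W = -σ X W Z Y ∧
      σ X Y Z W = -σ X Y W Z := by
  have skew : ∀ X Y : V, T X Y = -T Y X := fun X Y =>
    ext_inner_right ℝ fun Z => by rw [inner_neg_left, hT, hT, hτ12]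
  have skew_left : ∀ A B C D : V, ⟪T A B, T C D⟫ = -⟪T B A, T C D⟫ := fun A B C D => by
    rw [skew A B, inner_neg_left]
  have skew_right : ∀ A B C D : V, ⟪T A B, T C D⟫ = -⟪T A B, T D C⟫ := fun A B C D => by
    rw [skew C D, inner_neg_right]
  have swap₁₂ : ∀ X Y Z W : V, σ X Y Z W = -σ Y X Z W := fun X Y Z W => by
    rw [hσ, hσ]
    linarith [skew_left X Y Z W, skew_left Y Z X W, skew_left Z X Y W]
  have swap₂₃ : ∀ X Y Z W : V, σ X Y Z W = -σ X Z Y W := fun X Y Z W => by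
    rw [hσ, hσ]
    linarith [skew_left X Y Z W, skew_left Y Z X W, skew_left Z X Y W]
  have swap₃₄ : ∀ X Y Z W : V, σ X Y Z W = -σ X Y W Z := fun X Y Z W => by
    rw [hσ, hσ]
    linarith [skew_right X Y Z W, skew_right Y Z X W, skew_left Z X Y W,
      real_inner_comm (T Y W) (T X Z), real_inner_comm (T W X) (T Y Z)]
  intro X Y Z W
  refine ⟨swap₁₂ X Y Z W, ?_, ?_, swap₂₃ X Y Z W, ?_, swap₃₄ X Y Z W⟩
  · rw [swap₁₂ X Y, swap₂₃ Y X, swap₁₂ Y Z, neg_neg]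
  · rw [swap₁₂ X Y, swap₂₃ Y X, swap₃₄ Y Z, swap₂₃ Y Z, swap₁₂ Y W, neg_neg, neg_neg]
  · rw [swap₂₃ X Y, swap₃₄ X Z, swap₂₃ X Z, neg_neg]
end

section
/- Let m be a positive integer, let τ_{ijk} be a fully antisymmetric family of real numbers, let R_{ijkl} be an algebraic curvature tensor on ℝ^m, define R'_{ijkl} := R_{ijkl} - (1/4) Σ_p (2 τ_{ijp} τ_{kpl} + τ_{jkp} τ_{ipl} + τ_{kip} τ_{jpl}), and set S_{ijkl} := R'_{ijkl} - Σ_p τ_{ijp} τ_{klp}. Then S is itself an algebraic curvature tensor: S_{ijkl} = -S_{jikl}, S_{ijkl} = -S_{ijlk}, S_{ijkl} = S_{klij}, and S satisfies the first Bianchi identity S_{ijkl} + S_{jkil} + S_{kijl} = 0. -/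
open scoped BigOperators

theorem statement10 (m : ℕ) (hm : 0 < m)
    (τ : Fin m → Fin m → Fin m → ℝ)
    (hτ12 : ∀ i j k, τ i j k = -τ j i k)
    (hτ23 : ∀ i j k, τ i j k = -τ i k j)
    (hτ13 : ∀ i j k, τ i j k = -τ k j i)
    (R : Fin m → Fin m → Fin m → Fin m → ℝ)
    (hR1 : ∀ i j k l, R i j k l = -R j i k l)
    (hR2 : ∀ i j k l, R i j k l = -R i j l k)
    (hR3 : ∀ i j k l, R i j k l = R k l i j)
    (hBianchi : ∀ i j k l, R i j k l + R j k i l + R k i j l = 0)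
    (R' : Fin m → Fin m → Fin m → Fin m → ℝ)
    (hR' : ∀ i j k l, R' i j k l = R i j k l
      - (1/4) * ∑ p, (2 * τ i j p * τ k p l + τ j k p * τ i p l + τ k i p * τ j p l))
    (S : Fin m → Fin m → Fin m → Fin m → ℝ)
    (hS : ∀ i j k l, S i j k l = R' i j k l - ∑ p, τ i j p * τ k l p) :
    (∀ i j k l, S i j k l = -S j i k l) ∧
    (∀ i j k l, S i j k l = -S i j l k) ∧
    (∀ i j k l, S i j k l = S k l i j) ∧
    (∀ i j k l, S i j k l + S j k i l + S k i j l = 0) := by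
  let T : Fin m → Fin m → Fin m → Fin m → ℝ := fun i j k l => ∑ p, τ i j p * τ k l p
  have T_antisymm : ∀ i j k l, T i j k l = -T j i k l := fun i j k l => by
    simp only [T, ← Finset.sum_neg_distrib]
    exact Finset.sum_congr rfl fun p _ => by rw [hτ12 i j p]; ring
  have T_symm : ∀ i j k l, T i j k l = T k l i j := fun i j k l =>
    Finset.sum_congr rfl fun p _ => mul_comm _ _
  have T_antisymm_right : ∀ i j k l, T i j k l = -T i j l k := fun i j k l => by
    rw [T_symm, T_antisymm, T_symm]
  have S_eq : ∀ i j k l,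
      S i j k l = R i j k l - 1 / 2 * T i j k l + 1 / 4 * (T j k i l + T k i j l) := by
    intro i j k l
    have h : ∑ p, (2 * τ i j p * τ k p l + τ j k p * τ i p l + τ k i p * τ j p l)
        = -(2 * T i j k l + T j k i l + T k i j l) := by
      simp only [T, Finset.mul_sum, ← Finset.sum_add_distrib, ← Finset.sum_neg_distrib]
      exact Finset.sum_congr rfl fun p _ => by
        rw [hτ23 k p l, hτ23 i p l, hτ23 j p l]; ring
    rw [hS, hR', h]
    change _ - T i j k l = _
    ring
  clear_value T
  refine ⟨fun i j k l => ?_, fun i j k l => ?_, fun i j k l => ?_, fun i j k l => ?_⟩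
  · rw [S_eq, S_eq]
    linarith [hR1 i j k l, T_antisymm i j k l, T_antisymm j k i l, T_antisymm k i j l]
  · rw [S_eq, S_eq]
    linarith [hR2 i j k l, T_antisymm_right i j k l, T_symm j k i l, T_antisymm i l j k,
      T_symm k i j l, T_antisymm_right j l k i]
  · rw [S_eq, S_eq]
    linarith [hR3 i j k l, T_symm i j k l, T_symm j k i l, T_antisymm i l j k,
      T_antisymm_right l i j k, T_antisymm k i j l, T_antisymm_right i k j l]
  · rw [S_eq, S_eq, S_eq]
    linarith [hBianchi i j k l]
end
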